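/- Fix an integer m ≥ 1 and let C : ℂ → ℂ be Chebyshev's method for p(z) = z^m(z−1)^m, given for 2z ≠ 1 by C(z) = z − z(z−1)·(2m(6m−1)z² − 2m(6m−1)z + 3m² − m)/(2(2mz − m)³). Then for every real y ≠ 0, C(1/2 + i·y) = 1/2 + i·φ(y), where φ(y) = (16(2m−1)(4m−1)y⁴ − 24m·y² − 1)/(128 m² y³); i.e. the vertical line through the pole 1/2 is forward invariant and C acts on it as φ. -/

import Mathlib

/-!
In the coordinate `w = z - 1/2` centred at the pole, Chebyshev's method is an odd rational function
of `w`, with coefficients rational in `m`. An odd rational function with real coefficients sends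
`i * y` to `i` times a real number, which is why the line `1/2 + iℝ` is preserved.
-/

section Field

variable {K L : Type*} [Field K] [Field L]

/-- Chebyshev's method `z - (1 + p p'' / (2 p'²)) p / p'` for `p = z ^ m * (z - 1) ^ m`, after
cancelling the common powers of `z` and `z - 1`. The parameter `m` may be any element of the field.
At the pole `z = 1/2` the value is the junk value `z`. -/
def chebyshevMap (m z : K) : K :=
  z - z * (z - 1) *
    (2 * m * (6 * m - 1) * z ^ 2 - 2 * m * (6 * m - 1) * z + (3 * m ^ 2 - m)) /
      (2 * (2 * m * z - m) ^ 3)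

/-- The conjugate of `chebyshevMap m` by the translation `w ↦ 1/2 + w`, which moves the pole
to `0`. -/
def centeredChebyshevMap (m w : K) : K :=
  (16 * (2 * m - 1) * (4 * m - 1) * w ^ 4 + 24 * m * w ^ 2 - 1) / (128 * m ^ 2 * w ^ 3)

/-- The map `φ` by which `chebyshevMap m` acts on the line `1/2 + i * y`, in the coordinate `y`. -/
def verticalChebyshevMap (m y : K) : K :=
  (16 * (2 * m - 1) * (4 * m - 1) * y ^ 4 - 24 * m * y ^ 2 - 1) / (128 * m ^ 2 * y ^ 3)

theorem chebyshevMap_half_add [NeZero (2 : K)] {m w : K} (hm : m ≠ 0) (hw : w ≠ 0) :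
    chebyshevMap m (1 / 2 + w) = 1 / 2 + centeredChebyshevMap m w := by
  have h_pow : (128 : K) = 2 ^ 7 := by norm_num
  have h_prod : (1 / 2 + w) * (1 / 2 + w - 1) = (4 * w ^ 2 - 1) / 2 ^ 2 := by
    field_simp
    ring
  have h_quad : 2 * m * (6 * m - 1) * (1 / 2 + w) ^ 2 - 2 * m * (6 * m - 1) * (1 / 2 + w) +
      (3 * m ^ 2 - m) = m * (4 * (6 * m - 1) * w ^ 2 - 1) / 2 := by
    field_simp
    ring
  have h_den : 2 * m * (1 / 2 + w) - m = 2 * m * w := by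
    field_simp
    ring
  rw [chebyshevMap, centeredChebyshevMap, h_prod, h_quad, h_den, h_pow]
  field_simp
  ring

theorem centeredChebyshevMap_mul_of_sq_eq_neg_one {i : K} (hi : i ^ 2 = -1) (m y : K) :
    centeredChebyshevMap m (i * y) = i * verticalChebyshevMap m y := by
  have hi_three : i ^ 3 = -i := by linear_combination i * hi
  have hi_four : i ^ 4 = 1 := by linear_combination (i ^ 2 - 1) * hi
  have hi_inv : i⁻¹ = -i := inv_eq_of_mul_eq_one_right (by linear_combination -hi)
  simp only [centeredChebyshevMap, verticalChebyshevMap, mul_pow, hi, hi_three, hi_four,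
    div_eq_mul_inv, mul_inv, inv_neg, hi_inv]
  ring

theorem map_verticalChebyshevMap (f : K →+* L) (m y : K) :
    f (verticalChebyshevMap m y) = verticalChebyshevMap (f m) (f y) := by
  simp [verticalChebyshevMap, map_ofNat f]

theorem vertical_line_invariant_general [NeZero (2 : L)] (f : K →+* L) {i : L} (hi : i ^ 2 = -1)
    {m y : K} (hm : m ≠ 0) (hy : y ≠ 0) :
    chebyshevMap (f m) (1 / 2 + i * f y) = 1 / 2 + i * f (verticalChebyshevMap m y) := by
  have hi_ne : i ≠ 0 := by
    rintro rfl
    simp at hi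
  rw [chebyshevMap_half_add (by simpa using hm) (mul_ne_zero hi_ne (by simpa using hy)),
    centeredChebyshevMap_mul_of_sq_eq_neg_one hi, map_verticalChebyshevMap]

end Field

/-- For `m ≥ 1`, the Chebyshev map `C` for `p(z) = z^m(z-1)^m` maps the vertical line
through the pole `1/2` to itself, acting on it as the real map `φ`:
`C(1/2 + iy) = 1/2 + iφ(y)` for every real `y ≠ 0`. -/
theorem vertical_line_invariant (m : ℕ) (hm : 1 ≤ m)
    (C : ℂ → ℂ)
    (hC : ∀ z : ℂ, 2 * z ≠ 1 →
      C z = z - z * (z - 1) *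
        (2 * (m : ℂ) * (6 * m - 1) * z ^ 2 - 2 * m * (6 * m - 1) * z + (3 * (m : ℂ) ^ 2 - m))
        / (2 * (2 * (m : ℂ) * z - m) ^ 3))
    (φ : ℝ → ℝ)
    (hφ : ∀ y : ℝ, y ≠ 0 →
      φ y = (16 * (2 * (m : ℝ) - 1) * (4 * m - 1) * y ^ 4 - 24 * m * y ^ 2 - 1)
        / (128 * (m : ℝ) ^ 2 * y ^ 3)) :
    ∀ y : ℝ, y ≠ 0 →
      C (1 / 2 + Complex.I * (y : ℂ)) = 1 / 2 + Complex.I * ((φ y : ℝ) : ℂ) := by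
  intro y hy
  have hm_real : (m : ℝ) ≠ 0 := Nat.cast_ne_zero.mpr (Nat.one_le_iff_ne_zero.mp hm)
  rw [hC _ (by simp [mul_add, hy]), hφ y hy]
  simpa [chebyshevMap, verticalChebyshevMap] using
    vertical_line_invariant_general Complex.ofRealHom Complex.I_sq hm_real hy
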